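/- Progress: If a statement S is well-typed under the empty context, i.e., ∅ ⊢ S ⇒ Γ' for some output context Γ', then for every store σ, either S is skip or there exist S' and σ' such that ⟨S, σ⟩ ↝ ⟨S', σ'⟩. -/

import Mathlib

inductive Ty : Type
  | int
  | bool
deriving DecidableEq

inductive Expr : Type
  | int (n : ℤ)
  | tt
  | ff
  | var (x : String)
  | plus (e₁ e₂ : Expr)
  | isOp (e₁ e₂ : Expr)

inductive Val : Type
  | int (n : ℤ)
  | bool (b : Bool)

/-- A value has a type: integer values have type `Int`, booleans have type `Bool`. -/
inductive ValHasTy : Val → Ty → Prop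
  | int (n : ℤ) : ValHasTy (.int n) .int
  | bool (b : Bool) : ValHasTy (.bool b) .bool

/-- Typing contexts: finite maps from variables to types. -/
def Ctx : Type := String → Option Ty

/-- Stores: partial maps from variables to values. -/
def Store : Type := String → Option Val

/-- Expression typing `Γ ⊢ e : τ`. -/
inductive HasTy : Ctx → Expr → Ty → Prop
  | int (Γ : Ctx) (n : ℤ) : HasTy Γ (.int n) .int
  | tt (Γ : Ctx) : HasTy Γ .tt .bool
  | ff (Γ : Ctx) : HasTy Γ .ff .bool
  | var (Γ : Ctx) (x : String) (τ : Ty) : Γ x = some τ → HasTy Γ (.var x) τ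
  | plus (Γ : Ctx) (e₁ e₂ : Expr) :
      HasTy Γ e₁ .int → HasTy Γ e₂ .int → HasTy Γ (.plus e₁ e₂) .int
  | rel (Γ : Ctx) (e₁ e₂ : Expr) (τ : Ty) :
      HasTy Γ e₁ τ → HasTy Γ e₂ τ → HasTy Γ (.isOp e₁ e₂) .bool

inductive Stmt : Type
  | skip
  | letBe (x : String) (e : Expr)
  | ifThenElse (e : Expr) (s₁ s₂ : Stmt)
  | print (e : Expr)
  | seq (s₁ s₂ : Stmt)

/-- Statement typing `Γ ⊢ S ⇒ Γ'`. -/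
inductive StmtTy : Ctx → Stmt → Ctx → Prop
  | skip (Γ : Ctx) : StmtTy Γ .skip Γ
  | letBe (Γ : Ctx) (x : String) (e : Expr) (τ : Ty) :
      HasTy Γ e τ → StmtTy Γ (.letBe x e) (fun y => if y = x then some τ else Γ y)
  | ifThenElse (Γ : Ctx) (e : Expr) (s₁ s₂ : Stmt) :
      HasTy Γ e .bool → StmtTy Γ s₁ Γ → StmtTy Γ s₂ Γ →
      StmtTy Γ (.ifThenElse e s₁ s₂) Γ
  | print (Γ : Ctx) (e : Expr) (τ : Ty) : HasTy Γ e τ → StmtTy Γ (.print e) Γ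
  | seq (Γ Γ' Γ'' : Ctx) (s₁ s₂ : Stmt) :
      StmtTy Γ s₁ Γ' → StmtTy Γ' s₂ Γ'' → StmtTy Γ (.seq s₁ s₂) Γ''

/-- Big-step expression evaluation `σ ⊢ e ⇓ v`. -/
inductive Eval : Store → Expr → Val → Prop
  | int (σ : Store) (n : ℤ) : Eval σ (.int n) (.int n)
  | tt (σ : Store) : Eval σ .tt (.bool true)
  | ff (σ : Store) : Eval σ .ff (.bool false)
  | var (σ : Store) (x : String) (v : Val) : σ x = some v → Eval σ (.var x) v
  | plus (σ : Store) (e₁ e₂ : Expr) (n₁ n₂ : ℤ) :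
      Eval σ e₁ (.int n₁) → Eval σ e₂ (.int n₂) →
      Eval σ (.plus e₁ e₂) (.int (n₁ + n₂))
  | isInt (σ : Store) (e₁ e₂ : Expr) (n₁ n₂ : ℤ) :
      Eval σ e₁ (.int n₁) → Eval σ e₂ (.int n₂) →
      Eval σ (.isOp e₁ e₂) (.bool (n₁ == n₂))
  | isBool (σ : Store) (e₁ e₂ : Expr) (b₁ b₂ : Bool) :
      Eval σ e₁ (.bool b₁) → Eval σ e₂ (.bool b₂) →
      Eval σ (.isOp e₁ e₂) (.bool (b₁ == b₂))

/-- Small-step statement semantics `⟨S, σ⟩ ↝ ⟨S', σ'⟩`. -/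
inductive Step : Stmt → Store → Stmt → Store → Prop
  | letBe (σ : Store) (x : String) (e : Expr) (v : Val) :
      Eval σ e v → Step (.letBe x e) σ .skip (fun y => if y = x then some v else σ y)
  | ifTrue (σ : Store) (e : Expr) (s₁ s₂ : Stmt) :
      Eval σ e (.bool true) → Step (.ifThenElse e s₁ s₂) σ s₁ σ
  | ifFalse (σ : Store) (e : Expr) (s₁ s₂ : Stmt) :
      Eval σ e (.bool false) → Step (.ifThenElse e s₁ s₂) σ s₂ σ
  | print (σ : Store) (e : Expr) (v : Val) : Eval σ e v → Step (.print e) σ .skip σ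
  | seqSkip (σ : Store) (s₂ : Stmt) : Step (.seq .skip s₂) σ s₂ σ
  | seqStep (σ σ' : Store) (s₁ s₁' s₂ : Stmt) :
      Step s₁ σ s₁' σ' → Step (.seq s₁ s₂) σ (.seq s₁' s₂) σ'

/-- `σ ⊨ Γ`: the store is well-typed for the context. -/
def StoreTy (σ : Store) (Γ : Ctx) : Prop :=
  ∀ x τ, Γ x = some τ → ∃ v, σ x = some v ∧ ValHasTy v τ

/-- The empty typing context. -/
def emptyCtx : Ctx := fun _ => none

/-! A statement can only get stuck on the expression it evaluates first. The first component of a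
sequence is typed in the same context as the sequence, hence so is that expression: a store matching
the initial context suffices, and no preservation argument is needed. -/

section

variable {σ : Store} {Γ Γ' : Ctx} {τ : Ty} {e e₁ e₂ : Expr}

theorem ValHasTy.exists_eq_int {v : Val} (hv : ValHasTy v .int) : ∃ n, v = .int n := by
  cases hv with
  | int n => exact ⟨n, rfl⟩

theorem ValHasTy.exists_eq_bool {v : Val} (hv : ValHasTy v .bool) : ∃ b, v = .bool b := by
  cases hv with
  | bool b => exact ⟨b, rfl⟩

theorem Eval.exists_isOp {v₁ v₂ : Val} (he₁ : Eval σ e₁ v₁) (he₂ : Eval σ e₂ v₂)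
    (hv₁ : ValHasTy v₁ τ) (hv₂ : ValHasTy v₂ τ) : ∃ b, Eval σ (.isOp e₁ e₂) (.bool b) := by
  cases τ with
  | int =>
    obtain ⟨n₁, rfl⟩ := hv₁.exists_eq_int
    obtain ⟨n₂, rfl⟩ := hv₂.exists_eq_int
    exact ⟨_, .isInt _ _ _ _ _ he₁ he₂⟩
  | bool =>
    obtain ⟨b₁, rfl⟩ := hv₁.exists_eq_bool
    obtain ⟨b₂, rfl⟩ := hv₂.exists_eq_bool
    exact ⟨_, .isBool _ _ _ _ _ he₁ he₂⟩

theorem HasTy.exists_eval_valHasTy (he : HasTy Γ e τ) (hσ : StoreTy σ Γ) :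
    ∃ v, Eval σ e v ∧ ValHasTy v τ := by
  induction he with
  | int n => exact ⟨_, .int _ n, .int n⟩
  | tt => exact ⟨_, .tt _, .bool true⟩
  | ff => exact ⟨_, .ff _, .bool false⟩
  | var x τ hx =>
    obtain ⟨v, hxv, hv⟩ := hσ x τ hx
    exact ⟨v, .var _ _ _ hxv, hv⟩
  | plus _ _ _ _ ih₁ ih₂ =>
    obtain ⟨v₁, he₁, hv₁⟩ := ih₁
    obtain ⟨v₂, he₂, hv₂⟩ := ih₂
    obtain ⟨n₁, rfl⟩ := hv₁.exists_eq_int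
    obtain ⟨n₂, rfl⟩ := hv₂.exists_eq_int
    exact ⟨_, .plus _ _ _ _ _ he₁ he₂, .int (n₁ + n₂)⟩
  | rel _ _ _ _ _ ih₁ ih₂ =>
    obtain ⟨v₁, he₁, hv₁⟩ := ih₁
    obtain ⟨v₂, he₂, hv₂⟩ := ih₂
    obtain ⟨b, hb⟩ := he₁.exists_isOp he₂ hv₁ hv₂
    exact ⟨_, hb, .bool b⟩

theorem Step.ifThenElse {b : Bool} (he : Eval σ e (.bool b)) (s₁ s₂ : Stmt) :
    Step (.ifThenElse e s₁ s₂) σ (if b then s₁ else s₂) σ := by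
  cases b with
  | true => exact .ifTrue _ _ _ _ he
  | false => exact .ifFalse _ _ _ _ he

theorem progress_general {S : Stmt} (hS : StmtTy Γ S Γ') (hσ : StoreTy σ Γ) :
    S = .skip ∨ ∃ S' σ', Step S σ S' σ' := by
  induction hS with
  | skip => exact .inl rfl
  | letBe _ x _ _ he =>
    obtain ⟨v, hev, -⟩ := he.exists_eval_valHasTy hσ
    exact .inr ⟨_, _, .letBe _ x _ v hev⟩
  | ifThenElse _ _ s₁ s₂ he =>
    obtain ⟨v, hev, hv⟩ := he.exists_eval_valHasTy hσ
    obtain ⟨b, rfl⟩ := hv.exists_eq_bool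
    exact .inr ⟨_, _, .ifThenElse hev s₁ s₂⟩
  | print _ _ _ he =>
    obtain ⟨v, hev, -⟩ := he.exists_eval_valHasTy hσ
    exact .inr ⟨_, _, .print _ _ v hev⟩
  | seq _ _ _ _ s₂ _ _ ih₁ =>
    rcases ih₁ hσ with rfl | ⟨s₁', σ', hstep⟩
    · exact .inr ⟨_, _, .seqSkip _ s₂⟩
    · exact .inr ⟨_, _, .seqStep _ _ _ _ s₂ hstep⟩

end

theorem storeTy_emptyCtx (σ : Store) : StoreTy σ emptyCtx :=
  fun _ _ hx => nomatch hx

/-- **Progress**: a statement well-typed under the empty context is either `skip`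
or can take a step from any store. -/
theorem progress (S : Stmt) (Γ' : Ctx) (h : StmtTy emptyCtx S Γ') :
    ∀ σ : Store, S = .skip ∨ ∃ S' σ', Step S σ S' σ' :=
  fun σ => progress_general h (storeTy_emptyCtx σ)
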